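/- The group homomorphism φ : SG_3 → PSL₂(ℤ[√−5]) determined by σ_1 ↦ [[1,1],[0,1]], σ_2 ↦ [[1,0],[−1,1]], τ ↦ [[1,ω],[0,1]] (classes modulo the center, where ω = √−5) is well defined; its kernel is the cyclic subgroup generated by (σ_1 σ_2 σ_1)², and its image is the subgroup PE₂(ℤ[√−5]) of PSL₂(ℤ[√−5]) generated by the classes of all matrices [[1,x],[0,1]] and [[1,0],[y,1]] with x, y ∈ ℤ[√−5]. -/

import Mathlib

/-!
Write `Δ = σ₁σ₂σ₁`, `z = Δ²` and `U(a + bω) = σ₁ᵃ τᵇ` in `SG3`. The assignment on generators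
already defines a homomorphism `Φ : SG3 → SL₂(ℤ[√-5])`, with `U(x) ↦ [[1,x],[0,1]]`,
`Δ ↦ [[0,1],[-1,0]]` and `z ↦ -1`, and `φ` is its composite with the projection to `PSL₂`. Since
`Δ U(-y) Δ⁻¹ ↦ [[1,0],[y,1]]`, the image of `φ` is `PE₂`.

For the kernel, which contains the central element `z`, the argument is Cohn's for discretely
normed rings. Every element of `SG3` has the form `zᵏ U(x₀) Δ U(x₁) Δ ⋯ Δ U(xₙ)`. The identities
`Δ U(0) Δ = z`, `Δ U(1) Δ = z U(-1) Δ U(-1)` and `Δ U(-1) Δ = U(1) Δ U(1)` shorten such a word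
whenever an interior letter `xᵢ`, `0 < i < n`, lies in `{0, 1, -1}`, so all interior letters may be
assumed outside this set (`exists_reduced`). Elements of `ℤ[√-5]` other than `0, ±1` have absolute
value at least `2`. Hence in the matrix of `U(x₁) Δ ⋯ Δ U(xₙ)` the first column `(a, c)` satisfies
`|c| < |a|`: a further letter replaces it by `(c - y a, -a)`, and `|c - y a| ≥ 2|a| - |c| > |a|`
(`norm_lt_norm`). So for `n ≥ 1` the whole word has lower left entry `-a ≠ 0` and is not central in
`SL₂`; for `n = 0` the matrix `[[1,x₀],[0,1]]` is central only if `x₀ = 0`. An element of the kernel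
is therefore a power of `z`.
-/

/-- Generators of the group `SG3`. -/
inductive SG3Gen : Type
  | s1 | s2 | t

open FreeGroup in
/-- Relators of `SG3`: `σ₁σ₂σ₁ = σ₂σ₁σ₂`, `σ₁τ = τσ₁`, `(σ₂σ₁)³τ = τ(σ₂σ₁)³`. -/
def SG3Rels : Set (FreeGroup SG3Gen) :=
  {of .s1 * of .s2 * of .s1 * (of .s2 * of .s1 * of .s2)⁻¹,
   of .s1 * of .t * (of .t * of .s1)⁻¹,
   (of .s2 * of .s1) ^ 3 * of .t * (of .t * (of .s2 * of .s1) ^ 3)⁻¹}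

/-- The group `SG3`. -/
abbrev SG3 : Type := PresentedGroup SG3Rels

/-- The generators of `SG3` as elements. -/
abbrev SG3.g (x : SG3Gen) : SG3 := PresentedGroup.of x

/-- `ℤ[√-5]`. -/
abbrev Zs5 : Type := Zsqrtd (-5)
/-- `SL₂(ℤ[√-5])`. -/
abbrev SL2Z5 : Type := Matrix.SpecialLinearGroup (Fin 2) Zs5
/-- `PSL₂(ℤ[√-5])`, the quotient of `SL₂(ℤ[√-5])` by its center. -/
abbrev PSL5 : Type := SL2Z5 ⧸ Subgroup.center SL2Z5

/-- The elementary matrix `[[1,x],[0,1]]` in `SL₂(ℤ[√-5])`. -/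
def elemU (x : Zs5) : SL2Z5 := ⟨!![1, x; 0, 1], by simp [Matrix.det_fin_two_of]⟩
/-- The elementary matrix `[[1,0],[y,1]]` in `SL₂(ℤ[√-5])`. -/
def elemL (y : Zs5) : SL2Z5 := ⟨!![1, 0; y, 1], by simp [Matrix.det_fin_two_of]⟩
/-- The matrix `[[1,0],[-1,1]]` in `SL₂(ℤ[√-5])`. -/
def sig2Mat : SL2Z5 := ⟨!![1, 0; -1, 1], by simp [Matrix.det_fin_two_of]⟩

/-- The subgroup `PE₂(ℤ[√-5])` of `PSL₂(ℤ[√-5])` generated by the classes of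
all elementary matrices `[[1,x],[0,1]]` and `[[1,0],[y,1]]`. -/
def PE2 : Subgroup PSL5 :=
  Subgroup.closure
    ({q : PSL5 | ∃ x : Zs5, q = QuotientGroup.mk (elemU x)} ∪
     {q : PSL5 | ∃ y : Zs5, q = QuotientGroup.mk (elemL y)})

/-- The defining property of the homomorphism `φ : SG3 → PSL₂(ℤ[√-5])`:
`σ₁ ↦ [[1,1],[0,1]]`, `σ₂ ↦ [[1,0],[-1,1]]`, `τ ↦ [[1,ω],[0,1]]` with `ω = √-5`. -/
def IsSG3toPSL (φ : SG3 →* PSL5) : Prop :=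
  φ (SG3.g .s1) = QuotientGroup.mk (elemU 1) ∧
  φ (SG3.g .s2) = QuotientGroup.mk sig2Mat ∧
  φ (SG3.g .t) = QuotientGroup.mk (elemU Zsqrtd.sqrtd)

namespace SG3

open SG3Gen

/-! ### Identities in `SG3` -/

lemma braid : g s1 * g s2 * g s1 = g s2 * g s1 * g s2 :=
  PresentedGroup.mk_eq_mk_of_mul_inv_mem (rels := SG3Rels) (by simp [SG3Rels])

lemma comm_s1_t : Commute (g s1) (g t) :=
  PresentedGroup.mk_eq_mk_of_mul_inv_mem (rels := SG3Rels) (by simp [SG3Rels])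

lemma comm_cube_t : Commute ((g s2 * g s1) ^ 3) (g t) :=
  PresentedGroup.mk_eq_mk_of_mul_inv_mem (rels := SG3Rels) (by simp [SG3Rels])

/-- The half twist `Δ = σ₁σ₂σ₁`. -/
def D : SG3 := g s1 * g s2 * g s1

/-- The central element `z = Δ²`. -/
def z : SG3 := D ^ 2

lemma D_mul_D : D * D = z := (pow_two D).symm

lemma D_s1 : D * g s1 = g s2 * D := by
  unfold D
  nth_rewrite 1 [braid]
  group

lemma D_s2 : D * g s2 = g s1 * D := by
  unfold D
  nth_rewrite 2 [braid]
  group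

lemma s2_eq : g s2 = (g s1)⁻¹ * D * (g s1)⁻¹ := by unfold D; group

lemma z_s1 : Commute z (g s1) := by
  change z * g s1 = g s1 * z
  rw [← D_mul_D, mul_assoc, D_s1, ← mul_assoc, D_s2, mul_assoc]

lemma z_eq : z = (g s2 * g s1) ^ 3 := by
  have h : D = g s2 * g s1 * g s2 := braid
  rw [← D_mul_D]
  nth_rewrite 1 [h]
  unfold D
  simp only [pow_succ, pow_zero, one_mul, mul_assoc]

lemma z_t : Commute z (g t) := z_eq ▸ comm_cube_t

/-- `U(a + bω) = σ₁ᵃ τᵇ`, the lift to `SG3` of `[[1, a + bω],[0,1]]`. -/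
def U (x : Zs5) : SG3 := g s1 ^ x.re * g t ^ x.im

lemma U_zero : U 0 = 1 := by simp [U]

lemma U_add (x y : Zs5) : U (x + y) = U x * U y := by
  simp only [U, Zsqrtd.re_add, Zsqrtd.im_add, zpow_add]
  have h := (comm_s1_t.zpow_zpow y.re x.im).eq
  simp only [mul_assoc]
  rw [← mul_assoc (g s1 ^ y.re) (g t ^ x.im), h, mul_assoc]

lemma U_one : U 1 = g s1 := by simp [U]

lemma U_sqrtd : U Zsqrtd.sqrtd = g t := by simp [U]

lemma U_neg (x : Zs5) : U (-x) = (U x)⁻¹ := by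
  rw [eq_inv_iff_mul_eq_one, ← U_add, neg_add_cancel, U_zero]

lemma z_U (x : Zs5) : Commute z (U x) :=
  (z_s1.zpow_right _).mul_right (z_t.zpow_right _)

lemma z_D : Commute z D := by
  unfold z
  exact (Commute.refl D).pow_left 2

lemma D_U_one_D : D * U 1 * D = z * (U (-1) * D * U (-1)) := by
  rw [U_neg, U_one, ← s2_eq, mul_assoc, ← D_mul_D, mul_assoc, D_s2]

lemma D_U_neg_one_D : D * U (-1) * D = U 1 * D * U 1 := by
  rw [U_neg, U_one, ← D_s2]
  simp only [D]
  group

/-! ### Words in `Δ` and `U` -/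

/-- The word `U(x₀) Δ U(x₁) Δ ⋯ Δ U(xₙ)` with first letter `x₀` and remaining letters
`[x₁, …, xₙ]`. -/
def word : Zs5 → List Zs5 → SG3
  | x, [] => U x
  | x, y :: l => U x * D * word y l

/-- The letters that may not occur in the interior of a reduced word: zero and the units. -/
def Bad (a : Zs5) : Prop := a = 0 ∨ a = 1 ∨ a = -1

lemma U_mul_word (u x : Zs5) (l : List Zs5) : U u * word x l = word (u + x) l := by
  cases l <;> simp only [word, U_add, mul_assoc]

lemma D_mul_word (x : Zs5) (l : List Zs5) : D * word x l = word 0 (x :: l) := by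
  simp [word, U_zero]

/-- A word with a bad interior letter can be shortened, up to a power of `z`. The last letter `xₙ`
is not interior, whence `List.dropLast`. -/
lemma shorten (l : List Zs5) : ∀ x : Zs5, (∃ a ∈ l.dropLast, Bad a) →
    ∃ (k : ℤ) (y : Zs5) (m : List Zs5), m.length < l.length ∧ word x l = z ^ k * word y m := by
  induction l with
  | nil => simp
  | cons y l ih =>
    rintro x ⟨a, ha, hb⟩
    match l, ih, ha with
    | [], _, ha => simp at ha
    | w :: l, ih, ha =>
      rw [List.dropLast_cons_of_ne_nil (by simp), List.mem_cons] at ha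
      rcases ha with rfl | ha
      · have key : word x (a :: w :: l) = U x * (D * U a * D) * word w l := by
          simp only [word, mul_assoc]
        rcases hb with rfl | rfl | rfl
        · refine ⟨1, x + w, l, by simp, ?_⟩
          rw [key, U_zero, mul_one, D_mul_D, ← (z_U x).eq, zpow_one, mul_assoc, U_mul_word]
        · refine ⟨1, x + -1, (-1 + w) :: l, by simp, ?_⟩
          rw [key, D_U_one_D, ← mul_assoc, ← (z_U x).eq, zpow_one]
          simp only [word, ← U_mul_word (-1) w, U_add, mul_assoc]
        · refine ⟨0, x + 1, (1 + w) :: l, by simp, ?_⟩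
          rw [key, D_U_neg_one_D]
          simp only [word, ← U_mul_word 1 w, U_add, mul_assoc, zpow_zero, one_mul]
      · obtain ⟨k, v, m, hm, e⟩ := ih y ⟨a, ha, hb⟩
        refine ⟨k, x, v :: m, by simpa using hm, ?_⟩
        have hc : U x * D * z ^ k = z ^ k * (U x * D) :=
          (((z_U x).mul_right z_D).zpow_left k).eq.symm
        rw [word, e, ← mul_assoc, hc, word, mul_assoc]

/-- The elements of `SG3` that are, up to a power of `z`, represented by a word. -/
def Rep (h : SG3) : Prop := ∃ (k : ℤ) (x : Zs5) (l : List Zs5), h = z ^ k * word x l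

lemma Rep.U_mul {h : SG3} (hh : Rep h) (u : Zs5) : Rep (U u * h) := by
  obtain ⟨k, x, l, rfl⟩ := hh
  exact ⟨k, u + x, l, by rw [← mul_assoc, ← ((z_U u).zpow_left k).eq, mul_assoc, U_mul_word]⟩

lemma Rep.D_mul {h : SG3} (hh : Rep h) : Rep (D * h) := by
  obtain ⟨k, x, l, rfl⟩ := hh
  exact ⟨k, 0, x :: l, by rw [← mul_assoc, ← (z_D.zpow_left k).eq, mul_assoc, D_mul_word]⟩

lemma Rep.D_inv_mul {h : SG3} (hh : Rep h) : Rep (D⁻¹ * h) := by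
  obtain ⟨k, x, l, e⟩ := hh.D_mul
  refine ⟨-1 + k, x, l, ?_⟩
  rw [zpow_add, mul_assoc, ← e, zpow_neg_one, ← D_mul_D]
  group

lemma rep_all (h : SG3) : Rep h := by
  have hcl : h ∈ Subgroup.closure (Set.range (PresentedGroup.of (rels := SG3Rels))) := by
    rw [PresentedGroup.closure_range_of]; trivial
  have key : ∀ p : SG3, Rep p → Rep (h * p) ∧ Rep (h⁻¹ * p) := by
    induction hcl using Subgroup.closure_induction with
    | mem x hx =>
      have hs (p : SG3) (hp : Rep p) : Rep ((g s1)⁻¹ * p) := by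
        rw [← U_one, ← U_neg]; exact hp.U_mul _
      have hs' (p : SG3) (hp : Rep p) : Rep (g s1 * p) := by
        rw [← U_one]; exact hp.U_mul _
      obtain ⟨i, rfl⟩ := hx
      intro p hp
      cases i with
      | s1 => exact ⟨hs' p hp, hs p hp⟩
      | t =>
        change Rep (g t * p) ∧ Rep ((g t)⁻¹ * p)
        rw [← U_sqrtd, ← U_neg]
        exact ⟨hp.U_mul _, hp.U_mul _⟩
      | s2 =>
        change Rep (g s2 * p) ∧ Rep ((g s2)⁻¹ * p)
        rw [s2_eq]
        simp only [mul_inv_rev, inv_inv, mul_assoc]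
        exact ⟨hs _ (hs _ hp).D_mul, hs' _ (hs' _ hp).D_inv_mul⟩
    | one => intro p hp; simpa using hp
    | mul x y _ _ hx hy =>
      intro p hp
      rw [mul_inv_rev, mul_assoc, mul_assoc]
      exact ⟨(hx _ (hy p hp).1).1, (hy _ (hx p hp).2).2⟩
    | inv x _ hx =>
      intro p hp
      rw [inv_inv]
      exact (hx p hp).symm
  simpa using (key 1 ⟨0, 0, [], by simp [word, U_zero]⟩).1

lemma exists_reduced (h : SG3) : ∃ (k : ℤ) (x : Zs5) (l : List Zs5),
    h = z ^ k * word x l ∧ ∀ a ∈ l.dropLast, ¬ Bad a := by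
  have main : ∀ (n : ℕ) (l : List Zs5), l.length = n → ∀ (k : ℤ) (x : Zs5), h = z ^ k * word x l →
      ∃ (k : ℤ) (x : Zs5) (l : List Zs5), h = z ^ k * word x l ∧ ∀ a ∈ l.dropLast, ¬ Bad a := by
    intro n
    induction n using Nat.strong_induction_on with
    | _ n ih =>
      rintro l rfl k x e
      by_cases hb : ∃ a ∈ l.dropLast, Bad a
      · obtain ⟨k', y, m, hm, e'⟩ := shorten l x hb
        exact ih _ hm m rfl (k + k') y (by rw [e, e', zpow_add, mul_assoc])
      · push Not at hb
        exact ⟨k, x, l, e, hb⟩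
  obtain ⟨k, x, l, e⟩ := rep_all h
  exact main _ l rfl k x e

/-! ### The homomorphism to `SL₂` -/

lemma coe_elemU (x : Zs5) : (elemU x : Matrix (Fin 2) (Fin 2) Zs5) = !![1, x; 0, 1] := rfl

lemma coe_elemL (y : Zs5) : (elemL y : Matrix (Fin 2) (Fin 2) Zs5) = !![1, 0; y, 1] := rfl

lemma coe_sig2Mat : (sig2Mat : Matrix (Fin 2) (Fin 2) Zs5) = !![1, 0; -1, 1] := rfl

/-- The images of the generators in `SL₂(ℤ[√-5])`. -/
def genMat : SG3Gen → SL2Z5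
  | s1 => elemU 1
  | s2 => sig2Mat
  | t => elemU Zsqrtd.sqrtd

/-- The lift `Φ : SG3 → SL₂(ℤ[√-5])` of `φ`. -/
def Phi : SG3 →* SL2Z5 :=
  PresentedGroup.toGroup (f := genMat) (by
    intro r hr
    simp only [SG3Rels, Set.mem_insert_iff, Set.mem_singleton_iff] at hr
    rcases hr with rfl | rfl | rfl <;>
    · simp only [map_mul, map_inv, map_pow, FreeGroup.lift_apply_of, mul_inv_eq_one]
      ext i j : 1
      fin_cases i <;> fin_cases j <;>
        simp [genMat, coe_elemU, coe_sig2Mat, pow_succ, Matrix.mul_apply, Fin.sum_univ_two,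
          add_comm])

lemma Phi_g (i : SG3Gen) : Phi (g i) = genMat i := PresentedGroup.toGroup.of _

lemma elemU_add (x y : Zs5) : elemU (x + y) = elemU x * elemU y := by
  ext i j : 1
  fin_cases i <;> fin_cases j <;> simp [coe_elemU, Matrix.mul_apply, Fin.sum_univ_two, add_comm]

/-- `elemU` as a homomorphism from the additive group of the ring. -/
def elemUHom : Multiplicative Zs5 →* SL2Z5 :=
  MonoidHom.mk' (fun x => elemU x.toAdd) fun x y => elemU_add x.toAdd y.toAdd

lemma Phi_U (x : Zs5) : Phi (U x) = elemU x := by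
  have h (n : ℤ) (y : Zs5) : elemU y ^ n = elemU (n • y) :=
    (map_zpow elemUHom (Multiplicative.ofAdd y) n).symm
  rw [U, map_mul, map_zpow, map_zpow, Phi_g, Phi_g, genMat, genMat, h, h, ← elemU_add]
  congr 1
  ext <;> simp

lemma Phi_D : (Phi D : Matrix (Fin 2) (Fin 2) Zs5) = !![0, 1; -1, 0] := by
  rw [D, map_mul, map_mul, Phi_g, Phi_g]
  ext i j : 1
  fin_cases i <;> fin_cases j <;>
    simp [genMat, coe_elemU, coe_sig2Mat, Matrix.mul_apply, Fin.sum_univ_two]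

lemma Phi_z : Phi z = -1 := by
  rw [← D_mul_D, map_mul]
  ext i j : 1
  fin_cases i <;> fin_cases j <;>
    simp [Phi_D, Matrix.mul_apply, Fin.sum_univ_two]

lemma Phi_conj (y : Zs5) : Phi (D * U (-y) * D⁻¹) = elemL y := by
  rw [map_mul, map_inv, mul_inv_eq_iff_eq_mul, map_mul, Phi_U]
  ext i j : 1
  fin_cases i <;> fin_cases j <;>
    simp [Phi_D, coe_elemU, coe_elemL, Matrix.mul_apply, Fin.sum_univ_two]

/-! ### Growth of the first column -/

/-- The embedding of `ℤ[√-5]` into `ℂ` sending `√-5` to `i√5`. -/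
noncomputable def toC : Zs5 →+* ℂ :=
  Zsqrtd.lift ⟨(Real.sqrt 5 : ℂ) * Complex.I, by
    have h : ((Real.sqrt 5 : ℝ) : ℂ) * (Real.sqrt 5 : ℝ) = 5 := by
      rw [← Complex.ofReal_mul, Real.mul_self_sqrt (by norm_num)]; norm_num
    rw [mul_mul_mul_comm, h, Complex.I_mul_I]; norm_num⟩

lemma normSq_toC (x : Zs5) : ‖toC x‖ ^ 2 = (x.re : ℝ) ^ 2 + 5 * (x.im : ℝ) ^ 2 := by
  rw [Complex.sq_norm, Complex.normSq_apply]
  have h : Real.sqrt 5 * Real.sqrt 5 = 5 := Real.mul_self_sqrt (by norm_num)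
  simp [toC]
  linear_combination (x.im : ℝ) ^ 2 * h

lemma two_le_norm {x : Zs5} (hx : ¬ Bad x) : 2 ≤ ‖toC x‖ := by
  have h : (4 : ℤ) ≤ x.re ^ 2 + 5 * x.im ^ 2 := by
    by_cases hi : x.im = 0
    · by_contra! hlt
      have h1 : x.re < 2 := by nlinarith
      have h2 : -2 < x.re := by nlinarith
      apply hx
      have h3 : x.re = 0 ∨ x.re = 1 ∨ x.re = -1 := by omega
      simpa [Bad, Zsqrtd.ext_iff, hi] using h3
    · have : 0 < x.im ^ 2 := by positivity
      nlinarith [sq_nonneg x.re]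
  have h' : (4 : ℝ) ≤ ‖toC x‖ ^ 2 := by rw [normSq_toC]; exact_mod_cast h
  nlinarith [norm_nonneg (toC x)]

lemma Phi_word_cons_zero (x y : Zs5) (l : List Zs5) :
    Phi (word x (y :: l)) 0 0 = Phi (word y l) 1 0 - x * Phi (word y l) 0 0 := by
  rw [word, map_mul, map_mul, Phi_U]
  simp [Phi_D, coe_elemU, Matrix.mul_apply, Fin.sum_univ_two]
  ring

lemma Phi_word_cons_one (x y : Zs5) (l : List Zs5) :
    Phi (word x (y :: l)) 1 0 = - Phi (word y l) 0 0 := by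
  rw [word, map_mul, map_mul, Phi_U]
  simp [Phi_D, coe_elemU, Matrix.mul_apply, Fin.sum_univ_two]

/-- In the tail `U(y) Δ ⋯ Δ U(xₙ)` of a reduced word the first column is dominated by its top
entry. The letter `y` is interior to the whole word, hence not bad, unless it is the last one; both
cases are covered by the condition on `(y :: l).dropLast`. -/
lemma norm_lt_norm (l : List Zs5) : ∀ y : Zs5, (∀ a ∈ (y :: l).dropLast, ¬ Bad a) →
    ‖toC (Phi (word y l) 1 0)‖ < ‖toC (Phi (word y l) 0 0)‖ := by
  induction l with
  | nil => intro y _; simp [word, Phi_U, coe_elemU]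
  | cons w l ih =>
    intro y h
    rw [List.dropLast_cons_of_ne_nil (by simp)] at h
    have hlt := ih w fun a ha => h a (List.mem_cons_of_mem _ ha)
    have hy := two_le_norm (h y List.mem_cons_self)
    rw [Phi_word_cons_zero, Phi_word_cons_one, map_neg, norm_neg, map_sub, map_mul]
    have h1 := norm_sub_norm_le (toC y * toC (Phi (word w l) 0 0)) (toC (Phi (word w l) 1 0))
    rw [norm_sub_rev, norm_mul] at h1
    nlinarith [norm_nonneg (toC (Phi (word w l) 0 0))]

lemma center_lower_left {M : SL2Z5} (h : M ∈ Subgroup.center SL2Z5) : M 1 0 = 0 := by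
  have e := congrArg (fun N : SL2Z5 => N 0 0) (Subgroup.mem_center_iff.1 h (elemU 1))
  simpa [coe_elemU, Matrix.mul_apply, Fin.sum_univ_two] using e

lemma center_upper_right {M : SL2Z5} (h : M ∈ Subgroup.center SL2Z5) : M 0 1 = 0 := by
  have e := congrArg (fun N : SL2Z5 => N 0 0) (Subgroup.mem_center_iff.1 h (elemL 1))
  simpa [coe_elemL, Matrix.mul_apply, Fin.sum_univ_two] using e

lemma Phi_z_zpow_mem_center (k : ℤ) : Phi (z ^ k) ∈ Subgroup.center SL2Z5 := by
  rw [map_zpow, Phi_z]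
  exact zpow_mem (Subgroup.mem_center_iff.2 fun M => by simp) k

lemma Phi_mem_center_iff (h : SG3) :
    Phi h ∈ Subgroup.center SL2Z5 ↔ h ∈ Subgroup.zpowers z := by
  constructor
  · intro hc
    obtain ⟨k, x, l, rfl, hl⟩ := exists_reduced h
    rw [map_mul, Subgroup.mul_mem_cancel_left _ (Phi_z_zpow_mem_center k)] at hc
    cases l with
    | nil =>
      have hx : x = 0 := by simpa [word, Phi_U, coe_elemU] using center_upper_right hc
      exact ⟨k, by simp [hx, word, U_zero]⟩
    | cons y l =>
      have h0 := center_lower_left hc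
      rw [Phi_word_cons_one, neg_eq_zero] at h0
      have hlt := norm_lt_norm l y hl
      rw [h0, map_zero, norm_zero] at hlt
      exact absurd hlt (norm_nonneg _).not_gt
  · rintro ⟨k, rfl⟩
    exact Phi_z_zpow_mem_center k

/-- The homomorphism `φ : SG3 → PSL₂(ℤ[√-5])`. -/
def phi : SG3 →* PSL5 := (QuotientGroup.mk' (Subgroup.center SL2Z5)).comp Phi

lemma phi_apply (h : SG3) : phi h = QuotientGroup.mk (Phi h) := rfl

lemma isSG3toPSL_phi : IsSG3toPSL phi := by
  simp only [IsSG3toPSL, phi_apply, Phi_g, genMat, and_self]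

lemma eq_phi {φ : SG3 →* PSL5} (h : IsSG3toPSL φ) : φ = phi := by
  obtain ⟨h1, h2, h3⟩ := h
  obtain ⟨e1, e2, e3⟩ := isSG3toPSL_phi
  apply PresentedGroup.ext
  rintro (_ | _ | _)
  · exact h1.trans e1.symm
  · exact h2.trans e2.symm
  · exact h3.trans e3.symm

lemma ker_phi : MonoidHom.ker phi = Subgroup.zpowers z := by
  ext h
  rw [MonoidHom.mem_ker, phi_apply, QuotientGroup.eq_one_iff, Phi_mem_center_iff]

lemma range_phi : MonoidHom.range phi = PE2 := by
  apply le_antisymm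
  · have hgen : ∀ i, phi (g i) ∈ PE2 := by
      intro i
      rw [phi_apply, Phi_g]
      apply Subgroup.subset_closure
      cases i with
      | s1 => exact Or.inl ⟨1, rfl⟩
      | s2 => exact Or.inr ⟨-1, rfl⟩
      | t => exact Or.inl ⟨Zsqrtd.sqrtd, rfl⟩
    rintro _ ⟨h, rfl⟩
    exact PresentedGroup.generated_by SG3Rels (PE2.comap phi) hgen h
  · rw [PE2, Subgroup.closure_le]
    rintro _ (⟨x, rfl⟩ | ⟨y, rfl⟩)
    · exact ⟨U x, by rw [phi_apply, Phi_U]⟩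
    · exact ⟨D * U (-y) * D⁻¹, by rw [phi_apply, Phi_conj]⟩

end SG3

/-- the homomorphism `φ : SG3 → PSL₂(ℤ[√-5])` with
`σ₁ ↦ [[1,1],[0,1]]`, `σ₂ ↦ [[1,0],[-1,1]]`, `τ ↦ [[1,ω],[0,1]]` is well
defined; its kernel is the cyclic subgroup generated by `(σ₁σ₂σ₁)²` and its
image is `PE₂(ℤ[√-5])`. -/
theorem SG3_to_PSL5 :
    (∃ φ : SG3 →* PSL5, IsSG3toPSL φ) ∧
    ∀ φ : SG3 →* PSL5, IsSG3toPSL φ →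
      MonoidHom.ker φ =
        Subgroup.zpowers ((SG3.g .s1 * SG3.g .s2 * SG3.g .s1) ^ 2) ∧
      MonoidHom.range φ = PE2 := by
  refine ⟨⟨SG3.phi, SG3.isSG3toPSL_phi⟩, fun φ hφ => ?_⟩
  rw [SG3.eq_phi hφ]
  exact ⟨SG3.ker_phi, SG3.range_phi⟩
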